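/- Let C be a non-circular component of G such that either F(μ) = 0 for some loop μ in C, or there exist loops μ₁, μ₂ in C with F(μ₁) < 0 < F(μ₂). Then ρ(A(β)^C) > 1 for every β ∈ ℝ. -/

import Mathlib

open Filter Finset

/-- The spectral radius of a real matrix, `ρ(M) = lim_n ‖Mⁿ‖^{1/n}`
(computed with the entrywise ℓ¹-norm, and as a `limsup` so that it is always defined;
it is `0` for the matrix over the empty index type). -/
noncomputable def specRad {n : Type*} [Fintype n] [DecidableEq n] (M : Matrix n n ℝ) : ℝ :=
  Filter.limsup (fun k : ℕ => (∑ i, ∑ j, |(M ^ k) i j|) ^ ((1 : ℝ) / (k : ℝ))) Filter.atTop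

/-- The spectral radius `ρ(B^S)` of the submatrix of `B` obtained by restricting to `S × S`. -/
noncomputable def specRadOn {V : Type*} [Fintype V] (B : Matrix V V ℝ) (S : Set V) : ℝ :=
  letI : Fintype S := (Set.toFinite S).fintype
  letI : DecidableEq S := Classical.decEq _
  specRad (fun i j : S => B i.1 j.1)

variable {V E : Type*}

/-- Consecutive edges of the list match up: `r(eᵢ) = s(eᵢ₊₁)`. -/
def ChainOK (src rng : E → V) (μ : List E) : Prop :=
  List.Chain' (fun e f => rng e = src f) μ

/-- A loop: a nonempty path `μ = e₁⋯eₙ` with `s(e₁) = r(eₙ)`. -/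
def IsLoop (src rng : E → V) (μ : List E) : Prop :=
  ∃ h : μ ≠ [], ChainOK src rng μ ∧ src (μ.head h) = rng (μ.getLast h)

/-- A loop lying in the vertex set `C`. -/
def LoopIn (src rng : E → V) (C : Set V) (μ : List E) : Prop :=
  IsLoop src rng μ ∧ ∀ e ∈ μ, src e ∈ C ∧ rng e ∈ C

/-- `v ⤳ w`: there is a (possibly length-0) path from `v` to `w`. -/
def GReaches (src rng : E → V) (v w : V) : Prop :=
  v = w ∨ ∃ μ : List E, ∃ h : μ ≠ [],
    ChainOK src rng μ ∧ src (μ.head h) = v ∧ rng (μ.getLast h) = w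

/-- The closure of a set of vertices: all vertices that reach it. -/
def GClosure (src rng : E → V) (C : Set V) : Set V :=
  {v | ∃ w ∈ C, GReaches src rng v w}

/-- A component: an equivalence class of `v ∼ w` (mutual reachability) containing a loop. -/
def GIsComponent (src rng : E → V) (C : Set V) : Prop :=
  (∃ v, C = {w | GReaches src rng v w ∧ GReaches src rng w v}) ∧
  ∃ μ : List E, LoopIn src rng C μ

/-- The property that the loop `μ` witnesses circularity of the component `C`: `μ` is a simple
loop visiting every vertex of `C`, and containing every edge of the graph joining vertices
of `C`. -/
def CircularWitness (src rng : E → V) (C : Set V) (μ : List E) : Prop :=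
  LoopIn src rng C μ ∧ (μ.map src).Nodup ∧
  (∀ v ∈ C, v ∈ μ.map src) ∧
  (∀ e : E, src e ∈ C → rng e ∈ C → e ∈ μ)

/-- A circular component: a component containing, up to the choice of starting vertex,
exactly one loop. -/
def IsCircular (src rng : E → V) (C : Set V) : Prop :=
  GIsComponent src rng C ∧ ∃ μ : List E, CircularWitness src rng C μ

/-- The matrix `A(β)` with entries `A(β)_{vw} = Σ_{e : v → w} e^{-β F(e)}`. -/
noncomputable def Amat [Fintype E] [DecidableEq V] (src rng : E → V) (F : E → ℝ) (β : ℝ) :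
    Matrix V V ℝ :=
  fun v w => ∑ e ∈ Finset.univ.filter (fun e => src e = v ∧ rng e = w), Real.exp (-β * F e)

/-- `F` extended to paths: `F(e₁⋯eₙ) = F(e₁) + ⋯ + F(eₙ)`. -/
def Fpath (F : E → ℝ) (μ : List E) : ℝ := (μ.map F).sum

/-!
Call the weight of a path the product of `exp (-β F e)` over its edges `e`; then `(A(β)ⁿ) v u` is
the sum of the weights of the paths of length `n` from `v` to `u`. Whatever the sign of `β`, the
hypothesis on `F` provides a loop in `C` of weight at least one. Cutting a loop at a repeated
vertex factors its weight over two shorter loops, so there is also a simple loop `μ` of weight at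
least one. As `C` is not circular, `μ` misses some edge joining vertices of `C`, and hence differs
from some loop `ν` with the same base point that runs through that edge. The powers of `μ` and `ν`
of length `|μ||ν|` are distinct loops, so their weights add up to more than one in a diagonal entry
of `A(β)^{|μ||ν|}`, and the powers of that entry make `‖A(β)ᵏ‖` grow exponentially.
-/

section Paths

variable {src rng : E → V}

/-- `IsPath src rng v l u` says that the list of edges `l` is a path from `v` to `u`. The empty
list is the path of length `0` at each vertex. -/
def IsPath (src rng : E → V) : V → List E → V → Prop
  | v, [], u => v = u
  | v, e :: l, u => src e = v ∧ IsPath src rng (rng e) l u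

theorem isPath_append {v u : V} {a b : List E} :
    IsPath src rng v (a ++ b) u ↔ ∃ t, IsPath src rng v a t ∧ IsPath src rng t b u := by
  induction a generalizing v with
  | nil => simp only [List.nil_append, IsPath, exists_eq_left']
  | cons e a ih => simp only [List.cons_append, IsPath, ih, and_assoc, exists_and_left]

theorem IsPath.flatten_replicate {v : V} {l : List E} (h : IsPath src rng v l v) (n : ℕ) :
    IsPath src rng v (List.replicate n l).flatten v := by
  induction n with
  | zero => rfl
  | succ n ih =>
    rw [List.replicate_succ, List.flatten_cons]
    exact isPath_append.2 ⟨v, h, ih⟩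

theorem chainOK_iff_isChain {l : List E} :
    ChainOK src rng l ↔ l.IsChain fun e f => rng e = src f :=
  Iff.rfl

theorem isPath_iff_chainOK {l : List E} (hl : l ≠ []) {v u : V} :
    IsPath src rng v l u ↔ ChainOK src rng l ∧ src (l.head hl) = v ∧ rng (l.getLast hl) = u := by
  induction l generalizing v with
  | nil => exact absurd rfl hl
  | cons e l ih =>
    cases l with
    | nil => simp [IsPath, chainOK_iff_isChain]
    | cons f l =>
      rw [IsPath, ih (List.cons_ne_nil f l)]
      simp only [chainOK_iff_isChain, List.isChain_cons_cons, List.head_cons,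
        List.getLast_cons_cons]
      tauto

theorem gReaches_iff_exists_isPath {v u : V} :
    GReaches src rng v u ↔ ∃ l, IsPath src rng v l u := by
  constructor
  · rintro (h | ⟨l, hl, h⟩)
    · exact ⟨[], h⟩
    · exact ⟨l, (isPath_iff_chainOK hl).2 h⟩
  · rintro ⟨l, h⟩
    obtain rfl | hl := eq_or_ne l []
    · exact Or.inl h
    · exact Or.inr ⟨l, hl, (isPath_iff_chainOK hl).1 h⟩

theorem isLoop_iff_exists_isPath {l : List E} :
    IsLoop src rng l ↔ l ≠ [] ∧ ∃ v, IsPath src rng v l v := by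
  constructor
  · rintro ⟨hl, hchain, hclosed⟩
    exact ⟨hl, _, (isPath_iff_chainOK hl).2 ⟨hchain, hclosed, rfl⟩⟩
  · rintro ⟨hl, v, h⟩
    obtain ⟨hchain, hhead, hlast⟩ := (isPath_iff_chainOK hl).1 h
    exact ⟨hl, hchain, hhead.trans hlast.symm⟩

theorem GReaches.trans {v t u : V} (hvt : GReaches src rng v t) (htu : GReaches src rng t u) :
    GReaches src rng v u := by
  obtain ⟨a, ha⟩ := gReaches_iff_exists_isPath.1 hvt
  obtain ⟨b, hb⟩ := gReaches_iff_exists_isPath.1 htu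
  exact gReaches_iff_exists_isPath.2 ⟨a ++ b, isPath_append.2 ⟨t, ha, hb⟩⟩

theorem gReaches_src_rng (e : E) : GReaches src rng (src e) (rng e) :=
  gReaches_iff_exists_isPath.2 ⟨[e], rfl, rfl⟩

theorem IsLoop.exists_cut_of_not_nodup {μ : List E} (hμ : IsLoop src rng μ)
    (hnodup : ¬ (μ.map src).Nodup) :
    ∃ a b c, μ = a ++ b ++ c ∧ IsLoop src rng b ∧ IsLoop src rng (a ++ c) := by
  obtain ⟨a, e, b, f, c, rfl, hef⟩ :
      ∃ a e b f c, μ = a ++ (e :: b) ++ (f :: c) ∧ src e = src f := by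
    simp only [List.nodup_iff_sublist, not_forall, not_not, List.sublist_map_iff] at hnodup
    obtain ⟨x, l, hl, hx⟩ := hnodup
    obtain ⟨e, f, rfl, rfl, hf⟩ : ∃ e f, l = [e, f] ∧ src e = x ∧ src f = x := by
      obtain ⟨e, _, rfl, he, h⟩ := List.map_eq_cons_iff.1 hx.symm
      obtain ⟨f, rfl, hf⟩ := List.map_eq_singleton_iff.1 h
      exact ⟨e, f, rfl, he, hf⟩
    obtain ⟨r, s, rfl, he, hfs⟩ := List.cons_sublist_iff.1 hl
    obtain ⟨a, b, rfl⟩ := List.append_of_mem he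
    obtain ⟨b', c, rfl⟩ := List.append_of_mem (List.singleton_sublist.1 hfs)
    exact ⟨a, e, b ++ b', f, c, by simp only [List.append_assoc, List.cons_append], hf.symm⟩
  obtain ⟨-, v, h⟩ := isLoop_iff_exists_isPath.1 hμ
  obtain ⟨u, hab, hc⟩ := isPath_append.1 h
  obtain ⟨t, ha, hb⟩ := isPath_append.1 hab
  obtain rfl : t = u := hb.1.symm.trans (hef.trans hc.1)
  exact ⟨a, e :: b, f :: c, rfl,
    isLoop_iff_exists_isPath.2 ⟨List.cons_ne_nil e b, t, hb⟩,
    isLoop_iff_exists_isPath.2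
      ⟨List.append_ne_nil_of_right_ne_nil a (List.cons_ne_nil f c), v, isPath_append.2 ⟨t, ha, hc⟩⟩⟩

theorem IsLoop.exists_nodup {P : List E → Prop}
    (hP : ∀ a b c, P (a ++ b ++ c) → P b ∨ P (a ++ c)) {μ : List E} (hμ : IsLoop src rng μ)
    (hPμ : P μ) : ∃ ν, IsLoop src rng ν ∧ (ν.map src).Nodup ∧ P ν := by
  by_cases hnodup : (μ.map src).Nodup
  · exact ⟨μ, hμ, hnodup, hPμ⟩
  · obtain ⟨a, b, c, hcut, hb, hac⟩ := hμ.exists_cut_of_not_nodup hnodup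
    obtain hPb | hPac := hP a b c (hcut ▸ hPμ)
    · exact hb.exists_nodup hP hPb
    · exact hac.exists_nodup hP hPac
termination_by μ.length
decreasing_by
  all_goals
    have hb_pos := List.length_pos_iff.2 hb.1
    have hac_pos := List.length_pos_iff.2 hac.1
    simp only [hcut, List.length_append] at hac_pos ⊢
    omega

theorem IsLoop.exists_nodup_one_le_prod {R : Type*} [CommSemiring R] [LinearOrder R]
    [IsStrictOrderedRing R] {w : E → R} (hw : ∀ e, 0 ≤ w e) {μ : List E} (hμ : IsLoop src rng μ)
    (hμ_one : 1 ≤ (μ.map w).prod) :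
    ∃ ν, IsLoop src rng ν ∧ (ν.map src).Nodup ∧ 1 ≤ (ν.map w).prod := by
  refine hμ.exists_nodup (P := fun l => 1 ≤ (l.map w).prod) (fun a b c habc => ?_) hμ_one
  by_contra! hlt
  have hb : 0 ≤ (b.map w).prod := List.prod_nonneg (List.forall_mem_map.2 fun e _ => hw e)
  refine habc.not_gt ?_
  calc ((a ++ b ++ c).map w).prod = (b.map w).prod * ((a ++ c).map w).prod := by
        simp only [List.map_append, List.prod_append]; ring
    _ < 1 := mul_lt_one_of_nonneg_of_lt_one_left hb hlt.1 hlt.2.le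

end Paths

section SpectralRadius

variable {n : Type*} [Fintype n] [DecidableEq n]

theorem apply_self_pow_le_pow_apply_self {R : Type*} [Semiring R] [PartialOrder R]
    [IsOrderedRing R] {M : Matrix n n R} (hM : ∀ i j, 0 ≤ M i j) (v : n) (k : ℕ) :
    M v v ^ k ≤ (M ^ k) v v := by
  induction k with
  | zero => simp only [pow_zero, Matrix.one_apply_eq, le_refl]
  | succ k ih =>
    calc M v v ^ (k + 1) ≤ (M ^ k) v v * M v v := by
          rw [pow_succ]; exact mul_le_mul_of_nonneg_right ih (hM v v)
      _ ≤ ∑ t, (M ^ k) v t * M t v :=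
          Finset.single_le_sum (f := fun t => (M ^ k) v t * M t v)
            (fun t _ => mul_nonneg (Matrix.pow_apply_nonneg hM k v t) (hM t v)) (mem_univ v)
      _ = (M ^ (k + 1)) v v := by rw [pow_succ, Matrix.mul_apply]

open scoped Matrix.Norms.Operator in
theorem sum_abs_pow_le (M : Matrix n n ℝ) {k : ℕ} (hk : k ≠ 0) :
    ∑ i, ∑ j, |(M ^ k) i j| ≤ (Fintype.card n * ‖M‖) ^ k := by
  have row_le (A : Matrix n n ℝ) (i : n) : ∑ j, |A i j| ≤ ‖A‖ := by
    have h : ∑ j, ‖A i j‖₊ ≤ ‖A‖₊ := by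
      rw [Matrix.linfty_opNNNorm_def]
      exact Finset.le_sup (f := fun i => ∑ j, ‖A i j‖₊) (mem_univ i)
    simpa only [NNReal.coe_sum, coe_nnnorm, Real.norm_eq_abs] using NNReal.coe_le_coe.2 h
  calc ∑ i, ∑ j, |(M ^ k) i j| ≤ ∑ _i : n, ‖M ^ k‖ := Finset.sum_le_sum fun i _ => row_le _ i
    _ = Fintype.card n * ‖M ^ k‖ := by rw [Finset.sum_const, Finset.card_univ, nsmul_eq_mul]
    _ ≤ (Fintype.card n : ℝ) ^ k * ‖M‖ ^ k := by
        gcongr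
        · exact_mod_cast Nat.le_self_pow hk _
        · exact norm_pow_le' M (Nat.pos_of_ne_zero hk)
    _ = (Fintype.card n * ‖M‖) ^ k := (mul_pow _ _ _).symm

open scoped Matrix.Norms.Operator in
theorem isBoundedUnder_sum_abs_pow_rpow (M : Matrix n n ℝ) :
    IsBoundedUnder (· ≤ ·) atTop
      fun k : ℕ => (∑ i, ∑ j, |(M ^ k) i j|) ^ ((1 : ℝ) / (k : ℝ)) := by
  refine isBoundedUnder_of_eventually_le (a := Fintype.card n * ‖M‖) ?_
  filter_upwards [eventually_ne_atTop 0] with k hk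
  calc (∑ i, ∑ j, |(M ^ k) i j|) ^ ((1 : ℝ) / k)
      ≤ ((Fintype.card n * ‖M‖) ^ k) ^ ((1 : ℝ) / k) := by gcongr; exact sum_abs_pow_le M hk
    _ = Fintype.card n * ‖M‖ := by rw [one_div, Real.pow_rpow_inv_natCast (by positivity) hk]

theorem pow_apply_self_rpow_le_specRad {M : Matrix n n ℝ} (hM : ∀ i j, 0 ≤ M i j) (v : n) {N : ℕ}
    (hN : N ≠ 0) : (M ^ N) v v ^ ((1 : ℝ) / N) ≤ specRad M := by
  have hMN := Matrix.pow_apply_nonneg hM N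
  refine le_limsup_of_frequently_le ?_ (isBoundedUnder_sum_abs_pow_rpow M)
  refine (tendsto_id.const_mul_atTop' (Nat.pos_of_ne_zero hN)).frequently ?_
  refine (eventually_ne_atTop 0).frequently.mono fun k hk => ?_
  have diag_le : (M ^ N) v v ^ k ≤ ∑ i, ∑ j, |(M ^ (N * k)) i j| :=
    calc (M ^ N) v v ^ k ≤ (M ^ (N * k)) v v := by
          rw [pow_mul]; exact apply_self_pow_le_pow_apply_self hMN v k
      _ ≤ ∑ j, |(M ^ (N * k)) v j| :=
          (le_abs_self _).trans
            (Finset.single_le_sum (f := fun j => |(M ^ (N * k)) v j|)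
              (fun _ _ => abs_nonneg _) (mem_univ v))
      _ ≤ ∑ i, ∑ j, |(M ^ (N * k)) i j| :=
          Finset.single_le_sum (f := fun i => ∑ j, |(M ^ (N * k)) i j|)
            (fun _ _ => Finset.sum_nonneg fun _ _ => abs_nonneg _) (mem_univ v)
  calc (M ^ N) v v ^ ((1 : ℝ) / N) = ((M ^ N) v v ^ k) ^ ((1 : ℝ) / (N * k : ℕ)) := by
        rw [← Real.rpow_natCast_mul (hMN v v)]
        congr 1
        push_cast
        field_simp
    _ ≤ (∑ i, ∑ j, |(M ^ (N * k)) i j|) ^ ((1 : ℝ) / (N * k : ℕ)) :=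
        Real.rpow_le_rpow (pow_nonneg (hMN v v) k) diag_le (by positivity)

theorem one_lt_specRad_of_one_lt_pow_apply_self {M : Matrix n n ℝ} (hM : ∀ i j, 0 ≤ M i j)
    {v : n} {N : ℕ} (hN : N ≠ 0) (h : 1 < (M ^ N) v v) : 1 < specRad M :=
  (Real.one_lt_rpow h (by positivity)).trans_le (pow_apply_self_rpow_le_specRad hM v hN)

end SpectralRadius

section EdgeMatrix

variable [Fintype E] [DecidableEq V] {R : Type*}

/-- The adjacency matrix of a graph with edge weights `w`: the entry at `(v, u)` is the sum of the
weights of the edges from `v` to `u`. `Amat src rng F β` is the case `w e = exp (-β * F e)`. -/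
def edgeMatrix [AddCommMonoid R] (src rng : E → V) (w : E → R) : Matrix V V R :=
  fun v u => ∑ e with src e = v ∧ rng e = u, w e

variable {src rng : E → V}

theorem edgeMatrix_nonneg [AddCommMonoid R] [PartialOrder R] [IsOrderedAddMonoid R] {w : E → R}
    (hw : ∀ e, 0 ≤ w e) (v u : V) : 0 ≤ edgeMatrix src rng w v u :=
  Finset.sum_nonneg fun e _ => hw e

variable [Fintype V]

theorem edgeMatrix_mul_apply [NonUnitalNonAssocSemiring R] (w : E → R) (M : Matrix V V R)
    (v u : V) : (edgeMatrix src rng w * M) v u = ∑ e with src e = v, w e * M (rng e) u := by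
  simp only [Matrix.mul_apply, edgeMatrix, Finset.sum_mul, Finset.sum_filter]
  rw [Finset.sum_comm]
  refine Finset.sum_congr rfl fun e _ => ?_
  by_cases he : src e = v <;> simp [he]

open Classical in
theorem edgeMatrix_pow_apply [Semiring R] (w : E → R) (n : ℕ) (v u : V) :
    (edgeMatrix src rng w ^ n) v u =
      ∑ l : List.Vector E n with IsPath src rng v l.1 u, (l.1.map w).prod := by
  induction n generalizing v with
  | zero =>
    rw [Finset.sum_filter, Fintype.sum_eq_single List.Vector.nil fun l hl => absurd l.eq_nil hl]
    simp [Matrix.one_apply, IsPath, List.Vector.nil]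
  | succ n ih =>
    have cons_bijective :
        Function.Bijective fun p : E × List.Vector E n => p.1 ::ᵥ p.2 := by
      refine ⟨fun p q h => ?_, fun l => ?_⟩
      · simpa [List.Vector.eq_cons_iff, Prod.ext_iff] using h
      · obtain ⟨e, l, rfl⟩ := l.exists_eq_cons
        exact ⟨(e, l), rfl⟩
    simp only [pow_succ', edgeMatrix_mul_apply, ih, Finset.sum_filter]
    rw [← cons_bijective.sum_comp, Fintype.sum_prod_type]
    refine Finset.sum_congr rfl fun e _ => ?_
    by_cases he : src e = v <;> simp [he, IsPath, Finset.mul_sum]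

theorem prod_add_prod_le_edgeMatrix_pow_apply [CommSemiring R] [PartialOrder R]
    [IsOrderedRing R] {w : E → R} (hw : ∀ e, 0 ≤ w e) {n : ℕ} {v u : V} {p q : List E}
    (hp : IsPath src rng v p u) (hq : IsPath src rng v q u) (hp_len : p.length = n)
    (hq_len : q.length = n) (hne : p ≠ q) :
    (p.map w).prod + (q.map w).prod ≤ (edgeMatrix src rng w ^ n) v u := by
  classical
  rw [edgeMatrix_pow_apply]
  exact Finset.add_le_sum (i := ⟨p, hp_len⟩) (j := ⟨q, hq_len⟩)
    (f := fun l : List.Vector E n => (l.1.map w).prod)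
    (fun l _ => List.prod_nonneg (List.forall_mem_map.2 fun e _ => hw e))
    (mem_filter.2 ⟨mem_univ _, hp⟩) (mem_filter.2 ⟨mem_univ _, hq⟩)
    (fun h => hne (congrArg Subtype.val h))

theorem one_lt_edgeMatrix_pow_apply_self [CommSemiring R] [PartialOrder R]
    [IsStrictOrderedRing R] {w : E → R} (hw : ∀ e, 0 < w e) {v : V} {μ ν : List E}
    (hμ : IsPath src rng v μ v) (hν : IsPath src rng v ν v) (hμ_ne : μ ≠ [])
    (hμ_one : 1 ≤ (μ.map w).prod) {e : E} (heν : e ∈ ν) (heμ : e ∉ μ) :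
    1 < (edgeMatrix src rng w ^ (μ.length * ν.length)) v v := by
  set p := (List.replicate ν.length μ).flatten with hp
  set q := (List.replicate μ.length ν).flatten with hq
  have hne : p ≠ q := by
    intro h
    have heq : e ∈ q := List.mem_flatten_of_mem
      (List.mem_replicate.2 ⟨List.length_eq_zero_iff.not.2 hμ_ne, rfl⟩) heν
    obtain ⟨l, hl, hel⟩ := List.mem_flatten.1 (h ▸ heq : e ∈ p)
    exact heμ (List.eq_of_mem_replicate hl ▸ hel)
  have hp_one : 1 ≤ (p.map w).prod := by
    rw [hp, List.map_flatten, List.prod_flatten, List.map_replicate, List.map_replicate,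
      List.prod_replicate]
    exact one_le_pow₀ hμ_one
  calc (1 : R) < (p.map w).prod + (q.map w).prod :=
        lt_add_of_le_of_pos hp_one (List.prod_pos (List.forall_mem_map.2 fun e _ => hw e))
    _ ≤ (edgeMatrix src rng w ^ (μ.length * ν.length)) v v :=
        prod_add_prod_le_edgeMatrix_pow_apply (fun e => (hw e).le) (hμ.flatten_replicate _)
          (hν.flatten_replicate _) (by simp [hp, mul_comm]) (by simp [hq]) hne

end EdgeMatrix

section StronglyConnected

variable {src rng : E → V}

theorem circularWitness_univ (hconn : ∀ v u, GReaches src rng v u) {μ : List E}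
    (hμ : IsLoop src rng μ) (hnodup : (μ.map src).Nodup) (hmem : ∀ e, e ∈ μ) :
    CircularWitness src rng Set.univ μ := by
  refine ⟨⟨hμ, fun _ _ => ⟨trivial, trivial⟩⟩, hnodup, fun v _ => ?_, fun e _ _ => hmem e⟩
  suffices h : ∃ e, src e = v by
    obtain ⟨e, rfl⟩ := h
    exact List.mem_map_of_mem (hmem e)
  obtain ⟨p, hp⟩ := gReaches_iff_exists_isPath.1 (hconn v (src (μ.head hμ.1)))
  cases p with
  | nil => exact ⟨_, hp.symm⟩
  | cons e p => exact ⟨e, hp.1⟩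

theorem one_lt_specRad_edgeMatrix [Fintype V] [DecidableEq V] [Fintype E] {w : E → ℝ}
    (hw : ∀ e, 0 < w e) (hconn : ∀ v u, GReaches src rng v u)
    (hcirc : ∀ μ, ¬ CircularWitness src rng Set.univ μ)
    (hloop : ∃ μ, IsLoop src rng μ ∧ 1 ≤ (μ.map w).prod) :
    1 < specRad (edgeMatrix src rng w) := by
  obtain ⟨μ₀, hμ₀, hμ₀_one⟩ := hloop
  obtain ⟨μ, hμ, hnodup, hμ_one⟩ := hμ₀.exists_nodup_one_le_prod (fun e => (hw e).le) hμ₀_one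
  obtain ⟨e, heμ⟩ : ∃ e, e ∉ μ := by
    by_contra! hmem
    exact hcirc μ (circularWitness_univ hconn hμ hnodup hmem)
  obtain ⟨hμ_ne, v, hμ⟩ := isLoop_iff_exists_isPath.1 hμ
  obtain ⟨a, ha⟩ := gReaches_iff_exists_isPath.1 (hconn v (src e))
  obtain ⟨b, hb⟩ := gReaches_iff_exists_isPath.1 (hconn (rng e) v)
  have hν : IsPath src rng v (a ++ e :: b) v := isPath_append.2 ⟨src e, ha, rfl, hb⟩
  have heν : e ∈ a ++ e :: b := List.mem_append_right a List.mem_cons_self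
  refine one_lt_specRad_of_one_lt_pow_apply_self (edgeMatrix_nonneg fun e => (hw e).le)
    (mul_ne_zero (List.length_eq_zero_iff.not.2 hμ_ne) (List.length_eq_zero_iff.not.2 ?_))
    (one_lt_edgeMatrix_pow_apply_self hw hμ hν hμ_ne hμ_one heν heμ)
  exact List.ne_nil_of_mem heν

end StronglyConnected

section InducedSubgraph

variable {src rng : E → V} {C : Set V}

/-- The edges joining vertices of `C`. With `srcOn` and `rngOn` they form the subgraph of `G`
induced on `C`. -/
abbrev EdgeOn (src rng : E → V) (C : Set V) : Type _ :=
  {e : E // src e ∈ C ∧ rng e ∈ C}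

/-- The source map of the subgraph induced on `C`. -/
def srcOn (src rng : E → V) (C : Set V) (e : EdgeOn src rng C) : C := ⟨src e.1, e.2.1⟩

/-- The range map of the subgraph induced on `C`. -/
def rngOn (src rng : E → V) (C : Set V) (e : EdgeOn src rng C) : C := ⟨rng e.1, e.2.2⟩

theorem isLoop_map_val {l : List (EdgeOn src rng C)} :
    IsLoop src rng (l.map Subtype.val) ↔ IsLoop (srcOn src rng C) (rngOn src rng C) l := by
  simp [IsLoop, chainOK_iff_isChain, List.isChain_map, srcOn, rngOn, -List.map_subtype]

theorem CircularWitness.map_val {μ : List (EdgeOn src rng C)}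
    (h : CircularWitness (srcOn src rng C) (rngOn src rng C) Set.univ μ) :
    CircularWitness src rng C (μ.map Subtype.val) := by
  obtain ⟨⟨hloop, -⟩, hnodup, hvertex, hedge⟩ := h
  have map_src : (μ.map Subtype.val).map src = (μ.map (srcOn src rng C)).map Subtype.val := by
    simp only [List.map_map]; rfl
  refine ⟨⟨isLoop_map_val.2 hloop, fun e he => ?_⟩, ?_, fun v hv => ?_, fun e hs hr => ?_⟩
  · obtain ⟨e, -, rfl⟩ := List.mem_map.1 he
    exact e.2
  · rw [map_src]
    exact hnodup.map Subtype.val_injective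
  · rw [map_src]
    exact List.mem_map_of_mem (hvertex ⟨v, hv⟩ trivial)
  · exact List.mem_map_of_mem (hedge ⟨e, hs, hr⟩ trivial trivial)

theorem GIsComponent.gReaches (hC : GIsComponent src rng C) {v u : V} (hv : v ∈ C) (hu : u ∈ C) :
    GReaches src rng v u := by
  obtain ⟨⟨v₀, rfl⟩, -⟩ := hC
  exact hv.2.trans hu.1

theorem GIsComponent.mem_of_gReaches (hC : GIsComponent src rng C) {v t u : V} (hv : v ∈ C)
    (hu : u ∈ C) (hvt : GReaches src rng v t) (htu : GReaches src rng t u) : t ∈ C := by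
  obtain ⟨⟨v₀, rfl⟩, -⟩ := hC
  exact ⟨hv.1.trans hvt, htu.trans hu.2⟩

theorem GIsComponent.gReaches_srcOn_rngOn (hC : GIsComponent src rng C) (v u : C) :
    GReaches (srcOn src rng C) (rngOn src rng C) v u := by
  obtain ⟨p, hp⟩ := gReaches_iff_exists_isPath.1 (hC.gReaches v.2 u.2)
  induction p generalizing v with
  | nil => exact Or.inl (Subtype.ext hp)
  | cons e p ih =>
    obtain ⟨hsrc, hp⟩ := hp
    have hs : src e ∈ C := hsrc ▸ v.2
    have hr : rng e ∈ C :=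
      hC.mem_of_gReaches hs u.2 (gReaches_src_rng e) (gReaches_iff_exists_isPath.2 ⟨p, hp⟩)
    obtain rfl : srcOn src rng C ⟨e, hs, hr⟩ = v := Subtype.ext hsrc
    exact (gReaches_src_rng _).trans (ih ⟨rng e, hr⟩ hp)

theorem edgeMatrix_srcOn_rngOn_apply {R : Type*} [AddCommMonoid R] [Fintype E] [DecidableEq V]
    [DecidableEq C] [Fintype (EdgeOn src rng C)] (w : E → R) (v u : C) :
    edgeMatrix (srcOn src rng C) (rngOn src rng C) (fun e => w e.1) v u =
      edgeMatrix src rng w v u := by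
  refine Finset.sum_bij (fun e _ => e.1) (fun e he => ?_) (fun _ _ _ _ => Subtype.ext)
    (fun e he => ?_) (fun _ _ => rfl)
  · simpa [srcOn, rngOn, Subtype.ext_iff] using he
  · obtain ⟨hs, hr⟩ : src e = v ∧ rng e = u := by simpa using he
    exact ⟨⟨e, hs ▸ v.2, hr ▸ u.2⟩, mem_filter.2 ⟨mem_univ _, Subtype.ext hs, Subtype.ext hr⟩, rfl⟩

end InducedSubgraph

theorem prod_map_exp_neg_mul (F : E → ℝ) (β : ℝ) (l : List E) :
    (l.map fun e => Real.exp (-β * F e)).prod = Real.exp (-(β * Fpath F l)) := by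
  rw [← neg_mul, Fpath, ← List.sum_map_mul_left, Real.exp_list_sum, List.map_map]
  rfl

theorem specRad_component_gt_one_general {V E : Type*} [Fintype V] [DecidableEq V] [Fintype E]
    (src rng : E → V) (F : E → ℝ)
    (C : Set V) (hC : GIsComponent src rng C) (hnc : ¬ IsCircular src rng C) (β : ℝ)
    (hF : ∃ μ : List E, LoopIn src rng C μ ∧ β * Fpath F μ ≤ 0) :
    1 < specRadOn (Amat src rng F β) C := by
  classical
  obtain ⟨μ, ⟨hμ, hμC⟩, hβ⟩ := hF
  lift μ to List (EdgeOn src rng C) using hμC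
  let w : E → ℝ := fun e => Real.exp (-β * F e)
  let : Fintype C := (Set.toFinite C).fintype
  let : DecidableEq C := Classical.decEq _
  have hM : edgeMatrix (srcOn src rng C) (rngOn src rng C) (fun e => w e.1) =
      fun v u : C => Amat src rng F β v u :=
    funext₂ (edgeMatrix_srcOn_rngOn_apply w)
  have hμ_one : 1 ≤ (μ.map fun e => w e.1).prod := by
    have h := prod_map_exp_neg_mul F β (μ.map Subtype.val)
    rw [List.map_map] at h
    exact h ▸ Real.one_le_exp (neg_nonneg.2 hβ)
  rw [specRadOn, ← hM]
  exact one_lt_specRad_edgeMatrix (fun e => Real.exp_pos _) hC.gReaches_srcOn_rngOn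
    (fun ν hν => hnc ⟨hC, _, hν.map_val⟩) ⟨μ, isLoop_map_val.1 hμ, hμ_one⟩

theorem exists_loopIn_mul_Fpath_nonpos {src rng : E → V} {F : E → ℝ} {C : Set V}
    (hF : (∃ μ : List E, LoopIn src rng C μ ∧ Fpath F μ = 0) ∨
      (∃ μ₁ μ₂ : List E, LoopIn src rng C μ₁ ∧ LoopIn src rng C μ₂ ∧
        Fpath F μ₁ < 0 ∧ 0 < Fpath F μ₂)) (β : ℝ) :
    ∃ μ : List E, LoopIn src rng C μ ∧ β * Fpath F μ ≤ 0 := by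
  obtain ⟨μ, hμ, hzero⟩ | ⟨μ₁, μ₂, hμ₁, hμ₂, hneg, hpos⟩ := hF
  · exact ⟨μ, hμ, by rw [hzero, mul_zero]⟩
  · obtain hβ | hβ := le_total 0 β
    · exact ⟨μ₁, hμ₁, mul_nonpos_of_nonneg_of_nonpos hβ hneg.le⟩
    · exact ⟨μ₂, hμ₂, mul_nonpos_of_nonpos_of_nonneg hβ hpos.le⟩

/-- For a non-circular component `C` having either a loop with `F(μ) = 0` or loops of both
signs, `ρ(A(β)^C) > 1` for every `β`. -/
theorem specRad_component_gt_one {V E : Type*} [Fintype V] [DecidableEq V] [Fintype E]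
    (src rng : E → V) (F : E → ℝ)
    (C : Set V) (hC : GIsComponent src rng C) (hnc : ¬ IsCircular src rng C)
    (hF : (∃ μ : List E, LoopIn src rng C μ ∧ Fpath F μ = 0) ∨
      (∃ μ₁ μ₂ : List E, LoopIn src rng C μ₁ ∧ LoopIn src rng C μ₂ ∧
        Fpath F μ₁ < 0 ∧ 0 < Fpath F μ₂)) :
    ∀ β : ℝ, 1 < specRadOn (Amat src rng F β) C := by
  intro β
  exact specRad_component_gt_one_general src rng F C hC hnc β (exists_loopIn_mul_Fpath_nonpos hF β)
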